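/- Let (S,T) be modular data on Φ. Then every modular invariant M for (S,T) satisfies ∑_{a,b∈Φ} M_{ab} ≤ S_{00}^{-2}. Consequently, the set of modular invariants of a given modular data is finite. -/

import Mathlib

open scoped BigOperators
open Complex

/-- Modular data on a finite set `Φ` with distinguished element `zero`: a unitary symmetric
matrix `S`, a diagonal matrix `T` of finite order, with the `zero`-row of `S` real and
strictly positive, `S² = (ST)³`, and nonnegative-integer fusion coefficients `N a b c` given
by Verlinde's formula. -/
structure ModularData (Φ : Type) [Fintype Φ] [DecidableEq Φ] where
  zero : Φ
  S : Matrix Φ Φ ℂ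
  T : Matrix Φ Φ ℂ
  N : Φ → Φ → Φ → ℕ
  S_unitary : S * S.conjTranspose = 1
  S_symm : ∀ a b, S a b = S b a
  T_diag : ∀ a b, a ≠ b → T a b = 0
  T_order : ∃ m : ℕ, 0 < m ∧ T ^ m = 1
  S_zero_pos : ∀ a, (S zero a).im = 0 ∧ 0 < (S zero a).re
  modular_rel : S ^ 2 = (S * T) ^ 3
  verlinde : ∀ a b c,
    (N a b c : ℂ) = ∑ d, S a d * S b d * (starRingEnd ℂ) (S c d) / S zero d

/-- A modular invariant for modular data `(S,T)`: a matrix of nonnegative integers commuting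
(after casting to `ℂ`) with `S` and `T`, and with `M 0 0 = 1`. -/
def IsModularInvariant {Φ : Type} [Fintype Φ] [DecidableEq Φ] (M : ModularData Φ)
    (Z : Matrix Φ Φ ℕ) : Prop :=
  (Z.map (fun n => (n : ℂ))) * M.S = M.S * (Z.map (fun n => (n : ℂ))) ∧
  (Z.map (fun n => (n : ℂ))) * M.T = M.T * (Z.map (fun n => (n : ℂ))) ∧
  Z M.zero M.zero = 1

/-!
By Verlinde's formula the columns of `S` are common eigenvectors of the fusion matrices; on the
strictly positive `0`-column, `N_a` acts by the scalar `S_{a0} / S_{00}`. A nonzero eigenvalue of a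
nonnegative integer matrix with a strictly positive eigenvector is at least `1`, as one sees at a
smallest entry of the eigenvector, so `S_{00} ≤ S_{a0}` for all `a`. Since `Z` commutes with the
unitary matrix `S`, it equals `Sᴴ Z S`, whose `(0, 0)` entry is `∑ Z_{ab} S_{a0} S_{b0}`. Hence
`S_{00}² ∑ Z_{ab} ≤ Z_{00} = 1`.
-/

open scoped Matrix

section NonnegativeMatrices

variable {m n K : Type*} [Fintype m] [Fintype n]

theorem one_le_of_natCast_mulVec_eq_smul [Nonempty n] [Ring K] [LinearOrder K]
    [IsStrictOrderedRing K] {A : Matrix n n ℕ} {v : n → K} {r : K} (hv : ∀ i, 0 < v i)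
    (hr : r ≠ 0) (h : A.map (↑) *ᵥ v = r • v) : 1 ≤ r := by
  obtain ⟨b, hb⟩ := Finite.exists_min v
  have hrow : ∑ c, (A b c : K) * v c = r * v b := congrFun h b
  obtain ⟨c, -, hc⟩ : ∃ c ∈ Finset.univ, (A b c : K) * v c ≠ 0 :=
    Finset.exists_ne_zero_of_sum_ne_zero (hrow ▸ mul_ne_zero hr (hv b).ne')
  have hA : (1 : K) ≤ A b c :=
    Nat.one_le_cast.2 (Nat.one_le_iff_ne_zero.2 fun h0 => hc (by simp [h0]))
  refine le_of_mul_le_mul_right ?_ (hv b)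
  calc 1 * v b ≤ A b c * v c := mul_le_mul hA (hb c) (hv b).le (Nat.cast_nonneg _)
    _ ≤ ∑ c, (A b c : K) * v c :=
      Finset.single_le_sum (f := fun c => (A b c : K) * v c)
        (fun i _ => mul_nonneg (Nat.cast_nonneg _) (hv i).le) (Finset.mem_univ c)
    _ = r * v b := hrow

theorem sum_sum_mul_sq_le_dotProduct_mulVec [CommSemiring K] [PartialOrder K]
    [IsOrderedRing K] {Z : Matrix m n K} {v : m → K} {w : n → K} {c : K}
    (hZ : ∀ i j, 0 ≤ Z i j) (hc : 0 ≤ c) (hv : ∀ i, c ≤ v i) (hw : ∀ j, c ≤ w j) :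
    (∑ i, ∑ j, Z i j) * c ^ 2 ≤ v ⬝ᵥ Z *ᵥ w := by
  simp only [dotProduct, Matrix.mulVec, Finset.sum_mul, Finset.mul_sum]
  refine Finset.sum_le_sum fun i _ => Finset.sum_le_sum fun j _ => ?_
  calc Z i j * c ^ 2 = c * (Z i j * c) := by ring
    _ ≤ v i * (Z i j * w j) :=
      mul_le_mul (hv i) (mul_le_mul_of_nonneg_left (hw j) (hZ i j)) (mul_nonneg (hZ i j) hc)
        (hc.trans (hv i))

theorem finite_setOf_sum_sum_natCast_le [Semiring K] [PartialOrder K]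
    [IsStrictOrderedRing K] [Archimedean K] (C : K) :
    {Z : Matrix m n ℕ | ∑ i, ∑ j, (Z i j : K) ≤ C}.Finite := by
  obtain ⟨k, hk⟩ := exists_nat_ge C
  refine (Set.Finite.pi' fun _ : m => Set.Finite.pi' fun _ : n => Set.finite_Iic k).subset
    fun Z (hZ : _ ≤ C) i j => ?_
  have hsum : ∑ i, ∑ j, Z i j ≤ k := by exact_mod_cast hZ.trans hk
  calc Z i j ≤ ∑ j, Z i j := Finset.single_le_sum_of_canonicallyOrdered (Finset.mem_univ j)
    _ ≤ ∑ i, ∑ j, Z i j :=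
      Finset.single_le_sum_of_canonicallyOrdered (f := fun i => ∑ j, Z i j) (Finset.mem_univ i)
    _ ≤ k := hsum

end NonnegativeMatrices

section UnitaryMatrices

variable {Φ K : Type*} [Fintype Φ] [Field K] [StarRing K]

/-- The matrix `N_a` of multiplication by `a` in the fusion algebra of `S` with unit `o`: its
`(b, c)` entry is the fusion coefficient `N_{ab}^c` given by Verlinde's formula. -/
def fusionMatrix (S : Matrix Φ Φ K) (o a : Φ) : Matrix Φ Φ K :=
  Matrix.of fun b c => ∑ d, S a d * S b d * starRingEnd K (S c d) / S o d

variable [DecidableEq Φ]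

theorem fusionMatrix_eq_mul_diagonal_mul_conjTranspose (S : Matrix Φ Φ K) (o a : Φ) :
    fusionMatrix S o a = S * Matrix.diagonal (fun d => S a d / S o d) * Sᴴ := by
  ext b c
  rw [Matrix.mul_apply]
  simp only [fusionMatrix, Matrix.of_apply, Matrix.mul_diagonal, Matrix.conjTranspose_apply,
    starRingEnd_apply]
  exact Finset.sum_congr rfl fun d _ => by ring

theorem fusionMatrix_mulVec_col {S : Matrix Φ Φ K} (hS : S ∈ Matrix.unitaryGroup Φ K)
    (o a d : Φ) : fusionMatrix S o a *ᵥ S.col d = (S a d / S o d) • S.col d := by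
  have hmul : fusionMatrix S o a * S = S * Matrix.diagonal (fun d => S a d / S o d) := by
    rw [fusionMatrix_eq_mul_diagonal_mul_conjTranspose, Matrix.mul_assoc,
      ← Matrix.star_eq_conjTranspose, Matrix.mem_unitaryGroup_iff'.1 hS, Matrix.mul_one]
  ext b
  calc (fusionMatrix S o a * S) b d = S b d * (S a d / S o d) := by
        rw [hmul, Matrix.mul_diagonal]
    _ = (S a d / S o d) * S b d := mul_comm _ _

theorem star_col_dotProduct_mulVec_col_of_commute {R : Type*} [CommRing R] [StarRing R]
    {S Z : Matrix Φ Φ R} (hS : S ∈ Matrix.unitaryGroup Φ R) (hZ : Commute Z S) (i j : Φ) :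
    star (S.col i) ⬝ᵥ Z *ᵥ S.col j = Z i j := by
  have hconj : star S * (Z * S) = Z := by
    rw [hZ.eq, ← Matrix.mul_assoc, Matrix.mem_unitaryGroup_iff'.1 hS, Matrix.one_mul]
  exact congrFun₂ hconj i j

end UnitaryMatrices

section PositiveColumn

variable {Φ 𝕜 : Type*} [Fintype Φ] [DecidableEq Φ] [RCLike 𝕜] {S : Matrix Φ Φ 𝕜} {o : Φ}
  {v : Φ → ℝ}

theorem col_apply_le_of_fusionMatrix_eq_natCast (hS : S ∈ Matrix.unitaryGroup Φ 𝕜)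
    (hcol : ∀ a, S a o = v a) (hpos : ∀ a, 0 < v a) {a : Φ} {A : Matrix Φ Φ ℕ}
    (hA : fusionMatrix S o a = A.map (↑)) : v o ≤ v a := by
  have : Nonempty Φ := ⟨o⟩
  have heig : A.map (↑) *ᵥ v = (v a / v o) • v := by
    ext b
    have hb : ∑ c, (A b c : 𝕜) * S c o = S a o / S o o * S b o := by
      have := congrFun (fusionMatrix_mulVec_col hS o a o) b
      rwa [hA] at this
    simp only [hcol] at hb
    exact_mod_cast hb
  exact (one_le_div (hpos o)).1 <|
    one_le_of_natCast_mulVec_eq_smul hpos (div_pos (hpos a) (hpos o)).ne' heig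

theorem dotProduct_mulVec_eq_of_commute (hS : S ∈ Matrix.unitaryGroup Φ 𝕜)
    (hcol : ∀ a, S a o = v a) {Z : Matrix Φ Φ ℝ} (hZ : Commute (Z.map (↑)) S) :
    v ⬝ᵥ Z *ᵥ v = Z o o := by
  have h := star_col_dotProduct_mulVec_col_of_commute hS hZ o o
  simp only [dotProduct, Matrix.mulVec, Pi.star_apply, Matrix.col_apply, hcol, Matrix.map_apply,
    RCLike.star_def, RCLike.conj_ofReal] at h
  exact_mod_cast h

theorem sum_sum_le_div_sq_of_commute (hS : S ∈ Matrix.unitaryGroup Φ 𝕜)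
    (hcol : ∀ a, S a o = v a) (hpos : ∀ a, 0 < v a)
    (hN : ∀ a, ∃ A : Matrix Φ Φ ℕ, fusionMatrix S o a = A.map (↑)) {Z : Matrix Φ Φ ℝ}
    (hZ : ∀ a b, 0 ≤ Z a b) (hcomm : Commute (Z.map (↑)) S) :
    ∑ a, ∑ b, Z a b ≤ Z o o / v o ^ 2 := by
  have hmin : ∀ a, v o ≤ v a := fun a =>
    let ⟨_, hA⟩ := hN a
    col_apply_le_of_fusionMatrix_eq_natCast hS hcol hpos hA
  rw [le_div_iff₀ (pow_pos (hpos o) 2), ← dotProduct_mulVec_eq_of_commute hS hcol hcomm]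
  exact sum_sum_mul_sq_le_dotProduct_mulVec hZ (hpos o).le hmin hmin

theorem modularData_finitely_many_invariants_general (hS : S ∈ Matrix.unitaryGroup Φ 𝕜)
    (hcol : ∀ a, S a o = v a) (hpos : ∀ a, 0 < v a)
    (hN : ∀ a, ∃ A : Matrix Φ Φ ℕ, fusionMatrix S o a = A.map (↑)) :
    (∀ Z : Matrix Φ Φ ℕ, Commute (Z.map (↑)) S → Z o o = 1 →
      (∑ a, ∑ b, (Z a b : ℝ)) ≤ (v o ^ 2)⁻¹) ∧
    {Z : Matrix Φ Φ ℕ | Commute (Z.map (↑)) S ∧ Z o o = 1}.Finite := by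
  have hle : ∀ Z : Matrix Φ Φ ℕ, Commute (Z.map (↑)) S → Z o o = 1 →
      (∑ a, ∑ b, (Z a b : ℝ)) ≤ (v o ^ 2)⁻¹ := fun Z hZ hZo => by
    have hcomm : Commute ((Z.map ((↑) : ℕ → ℝ)).map ((↑) : ℝ → 𝕜)) S := by
      simpa [Matrix.map_map, Function.comp_def] using hZ
    simpa [hZo] using sum_sum_le_div_sq_of_commute hS hcol hpos hN (by simp) hcomm
  exact ⟨hle, (finite_setOf_sum_sum_natCast_le (v o ^ 2)⁻¹).subset fun Z hZ => hle Z hZ.1 hZ.2⟩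

end PositiveColumn

namespace ModularData

variable {Φ : Type} [Fintype Φ] [DecidableEq Φ] (M : ModularData Φ)

theorem S_apply_zero (a : Φ) : M.S a M.zero = ((M.S M.zero a).re : ℂ) := by
  rw [M.S_symm]
  exact Complex.ext rfl (M.S_zero_pos a).1

theorem fusionMatrix_eq_natCast (a : Φ) :
    fusionMatrix M.S M.zero a = (Matrix.of (M.N a)).map (↑) :=
  Matrix.ext fun b c => (M.verlinde a b c).symm

end ModularData

/-- Every modular invariant `Z` of modular data satisfies
`∑_{a,b} Z_{ab} ≤ S_{00}⁻²`; consequently there are only finitely many modular invariants. -/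
theorem modularData_finitely_many_invariants
    {Φ : Type} [Fintype Φ] [DecidableEq Φ] (M : ModularData Φ) :
    (∀ Z : Matrix Φ Φ ℕ, IsModularInvariant M Z →
      (∑ a, ∑ b, (Z a b : ℝ)) ≤ ((M.S M.zero M.zero).re ^ 2)⁻¹) ∧
    {Z : Matrix Φ Φ ℕ | IsModularInvariant M Z}.Finite := by
  obtain ⟨hle, hfin⟩ := modularData_finitely_many_invariants_general
    (Matrix.mem_unitaryGroup_iff.2 M.S_unitary) M.S_apply_zero (fun a => (M.S_zero_pos a).2)
    fun a => ⟨_, M.fusionMatrix_eq_natCast a⟩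
  exact ⟨fun Z hZ => hle Z hZ.1 hZ.2.2, hfin.subset fun Z hZ => ⟨hZ.1, hZ.2.2⟩⟩
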